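/- Let k ≥ 1 and let F(X) = Σ_{n≥0} |{π ∈ S_n : π avoids 132 and avoids the increasing pattern 12⋯k}|·Xⁿ ∈ ℚ⟦X⟧. Then F(X)·p_k(X) = p_{k−1}(X). (Equivalently, F(x) = U_{k−1}(1/(2√x)) / (√x·U_k(1/(2√x))).) -/

import Mathlib

/-- A pattern is a permutation of `{1,…,k}` for some `k`. -/
def Pattern : Type := Σ k : ℕ, Equiv.Perm (Fin k)

/-- `IsOccurrence τ π f` says that the strictly increasing tuple of indices `f` is an
occurrence of the pattern `τ` in the permutation `π`, i.e. `π ∘ f` is order-isomorphic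
to `τ`. -/
def IsOccurrence {k n : ℕ} (τ : Equiv.Perm (Fin k)) (π : Equiv.Perm (Fin n))
    (f : Fin k → Fin n) : Prop :=
  StrictMono f ∧ ∀ a b : Fin k, τ a < τ b ↔ π (f a) < π (f b)

/-- `π` contains the pattern `τ` (at least once). -/
def Contains {k n : ℕ} (τ : Equiv.Perm (Fin k)) (π : Equiv.Perm (Fin n)) : Prop :=
  ∃ f : Fin k → Fin n, IsOccurrence τ π f

/-- `π` contains the pattern `τ` exactly once. -/
def ContainsOnce {k n : ℕ} (τ : Equiv.Perm (Fin k)) (π : Equiv.Perm (Fin n)) : Prop :=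
  ∃! f : Fin k → Fin n, IsOccurrence τ π f

/-- `π` avoids every pattern in the set `T`. -/
def AvoidsSet {n : ℕ} (T : Set Pattern) (π : Equiv.Perm (Fin n)) : Prop :=
  ∀ p ∈ T, ¬ Contains p.2 π

/-- `f_T(n)`: the number of permutations of `{1,…,n}` avoiding every pattern in `T`. -/
noncomputable def avoidCount (T : Set Pattern) (n : ℕ) : ℕ :=
  Nat.card {π : Equiv.Perm (Fin n) // AvoidsSet T π}

/-- The pattern `132 ∈ S₃` (zero-indexed: `0 ↦ 0, 1 ↦ 2, 2 ↦ 1`). -/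
noncomputable def p132 : Equiv.Perm (Fin 3) := Equiv.ofBijective ![0, 2, 1] (by decide)

/-- `pU (m+1)` is the polynomial `p_m(X) = X^{m/2}·U_m(1/(2√X))` built from the Chebyshev
recurrence: `pU 0 = p_{−1} = 0`, `pU 1 = p_0 = 1`, and `p_{m+1} = p_m − X·p_{m−1}`. -/
noncomputable def pU : ℕ → Polynomial ℚ
  | 0 => 0
  | 1 => 1
  | m + 2 => pU (m + 1) - Polynomial.X * pU m

/-!
Write `σ ⊕ 1` for the permutation obtained from `σ` by appending a new maximum, and `σ ⊖ τ` for
the skew sum. Cutting a permutation just after its maximum shows that the nonempty `132`-avoiders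
are exactly the permutations `(σ ⊕ 1) ⊖ τ` with `σ` and `τ` avoiding `132`, uniquely. A pattern
of the form `ρ ⊕ 1` is skew-indecomposable, so it occurs in `(σ ⊕ 1) ⊖ τ` if and only if `ρ` occurs
in `σ` or `ρ ⊕ 1` occurs in `τ`. Hence the generating functions satisfy
`F_{ρ ⊕ 1} = 1 + X · F_ρ · F_{ρ ⊕ 1}` for every pattern `ρ`, and for `ρ = 12⋯k` this matches
the recurrence of the polynomials `p_m`.
-/

open Equiv (Perm)

section Occurrence

variable {k m n : ℕ} {ρ : Perm (Fin k)} {σ : Perm (Fin m)} {π : Perm (Fin n)}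
  {f : Fin k → Fin m} {g : Fin m → Fin n}

theorem IsOccurrence.comp_iff (hg : IsOccurrence σ π g) :
    IsOccurrence ρ π (g ∘ f) ↔ IsOccurrence ρ σ f := by
  have strictMono_iff : StrictMono (g ∘ f) ↔ StrictMono f :=
    forall₃_congr fun _ _ _ => hg.1.lt_iff_lt
  exact and_congr strictMono_iff
    (forall₂_congr fun a b => iff_congr Iff.rfl (hg.2 (f a) (f b)).symm)

theorem Contains.trans (hρ : Contains ρ σ) (hσ : Contains σ π) : Contains ρ π := by
  obtain ⟨f, hf⟩ := hρ
  obtain ⟨g, hg⟩ := hσ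
  exact ⟨g ∘ f, hg.comp_iff.2 hf⟩

theorem IsOccurrence.contains_of_forall_mem_range {f : Fin k → Fin n} (hf : IsOccurrence ρ π f)
    (hg : IsOccurrence σ π g) (hfg : ∀ i, f i ∈ Set.range g) : Contains ρ σ := by
  choose f' hf' using hfg
  obtain rfl : g ∘ f' = f := funext hf'
  exact ⟨f', hg.comp_iff.1 hf⟩

theorem contains_of_length_zero (ρ : Perm (Fin 0)) (π : Perm (Fin n)) : Contains ρ π :=
  ⟨Fin.elim0, fun a => a.elim0, fun a => a.elim0⟩

theorem contains_p132_of_lt {a b c : Fin n} (hab : a < b) (hbc : b < c) (hac : π a < π c)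
    (hcb : π c < π b) : Contains p132 π := by
  refine ⟨![a, b, c], ?_, ?_⟩
  · rw [Fin.strictMono_iff_lt_succ]
    intro i
    fin_cases i
    exacts [hab, hbc]
  · have h0 : p132 0 = 0 := rfl
    have h1 : p132 1 = 2 := rfl
    have h2 : p132 2 = 1 := rfl
    have hab' := hac.trans hcb
    intro i j
    fin_cases i <;> fin_cases j <;> simp [h0, h1, h2, hac, hcb, hab', hac.le, hcb.le, hab'.le]

end Occurrence

section AppendMax

variable {k n : ℕ}

/-- The permutation `σ ⊕ 1`: the one-line notation of `σ` followed by a new maximum. -/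
def appendMax (σ : Perm (Fin n)) : Perm (Fin (n + 1)) :=
  finSuccEquivLast.symm.permCongr σ.optionCongr

@[simp]
theorem appendMax_castSucc (σ : Perm (Fin n)) (i : Fin n) :
    appendMax σ i.castSucc = (σ i).castSucc := by
  simp [appendMax]

@[simp]
theorem appendMax_last (σ : Perm (Fin n)) : appendMax σ (Fin.last n) = Fin.last n := by
  simp [appendMax]

@[simp]
theorem appendMax_one : appendMax (1 : Perm (Fin n)) = 1 := by
  ext i
  cases i using Fin.lastCases <;> simp

theorem appendMax_injective : Function.Injective (appendMax (n := n)) :=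
  (Equiv.injective _).comp Equiv.optionCongr_injective

theorem exists_appendMax_eq {π : Perm (Fin (n + 1))} (hπ : π (Fin.last n) = Fin.last n) :
    ∃ σ, appendMax σ = π := by
  refine ⟨Equiv.removeNone (finSuccEquivLast.permCongr π), ?_⟩
  have fixes_none : finSuccEquivLast.permCongr π none = none := by simp [hπ]
  rw [appendMax, map_equiv_removeNone, fixes_none]
  ext i
  simp

theorem isOccurrence_castSucc_appendMax (σ : Perm (Fin n)) :
    IsOccurrence σ (appendMax σ) Fin.castSucc :=
  ⟨Fin.strictMono_castSucc, by simp⟩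

theorem contains_appendMax_appendMax {ρ : Perm (Fin k)} {σ : Perm (Fin n)} :
    Contains (appendMax ρ) (appendMax σ) ↔ Contains ρ σ := by
  constructor
  · rintro ⟨f, hf⟩
    have hf' : IsOccurrence ρ (appendMax σ) (f ∘ Fin.castSucc) :=
      hf.comp_iff.2 (isOccurrence_castSucc_appendMax ρ)
    refine hf'.contains_of_forall_mem_range (isOccurrence_castSucc_appendMax σ) fun i => ?_
    exact Fin.exists_castSucc_eq.2 (Fin.ne_last_of_lt (hf.1 (Fin.castSucc_lt_last i)))
  · rintro ⟨f, hf⟩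
    refine ⟨Fin.snoc (Fin.castSucc ∘ f) (Fin.last n), fun a b hab => ?_, fun a b => ?_⟩
    · cases b using Fin.lastCases <;> cases a using Fin.lastCases <;>
        simp_all [hf.1.lt_iff_lt, Fin.castSucc_lt_last, (Fin.le_last _).not_gt]
    · cases a using Fin.lastCases <;> cases b using Fin.lastCases <;>
        simp [hf.2, Fin.castSucc_lt_last, (Fin.le_last _).not_gt]

theorem contains_appendMax_iff_of_last_ne {ρ : Perm (Fin (k + 1))} {σ : Perm (Fin n)}
    (hρ : ρ (Fin.last k) ≠ Fin.last k) : Contains ρ (appendMax σ) ↔ Contains ρ σ := by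
  refine ⟨?_, fun h => h.trans ⟨_, isOccurrence_castSucc_appendMax σ⟩⟩
  rintro ⟨f, hf⟩
  have last_ne : f (Fin.last k) ≠ Fin.last n := by
    intro hlast
    have hlt : ρ (Fin.last k) < ρ (ρ.symm (Fin.last k)) := by
      simpa using Fin.lt_last_iff_ne_last.2 hρ
    rw [hf.2, hlast, appendMax_last] at hlt
    exact hlt.not_ge (Fin.le_last _)
  refine hf.contains_of_forall_mem_range (isOccurrence_castSucc_appendMax σ) fun i => ?_
  have hi : f i < Fin.last n :=
    (hf.1.monotone (Fin.le_last i)).trans_lt (Fin.lt_last_iff_ne_last.2 last_ne)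
  exact Fin.exists_castSucc_eq.2 hi.ne

end AppendMax

section SkewSum

variable {k m q n : ℕ}

/-- The positions `0, …, n - 1` cut into a block of length `m` followed by one of length `q`. The
equation `m + q = n` is an argument so that no casts between `Fin` types appear later on. -/
def blockEquiv (h : m + q = n) : Fin m ⊕ Fin q ≃ Fin n :=
  finSumFinEquiv.trans (finCongr h)

theorem val_blockEquiv_inl (h : m + q = n) (i : Fin m) : (blockEquiv h (.inl i) : ℕ) = i := by
  simp [blockEquiv]

theorem val_blockEquiv_inr (h : m + q = n) (j : Fin q) : (blockEquiv h (.inr j) : ℕ) = m + j := by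
  simp [blockEquiv]

theorem blockEquiv_inl_lt_inl (h : m + q = n) {i i' : Fin m} :
    blockEquiv h (.inl i) < blockEquiv h (.inl i') ↔ i < i' := by
  simp only [Fin.lt_def, val_blockEquiv_inl]

theorem blockEquiv_inr_lt_inr (h : m + q = n) {j j' : Fin q} :
    blockEquiv h (.inr j) < blockEquiv h (.inr j') ↔ j < j' := by
  simp only [Fin.lt_def, val_blockEquiv_inr, Nat.add_lt_add_iff_left]

theorem blockEquiv_inl_lt_inr (h : m + q = n) (i : Fin m) (j : Fin q) :
    blockEquiv h (.inl i) < blockEquiv h (.inr j) := by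
  rw [Fin.lt_def, val_blockEquiv_inl, val_blockEquiv_inr]
  omega

/-- The skew sum `σ ⊖ τ`: first `σ` on the large values, then `τ` on the small values. -/
def skewSum (h : m + q = n) (σ : Perm (Fin m)) (τ : Perm (Fin q)) : Perm (Fin n) :=
  (blockEquiv h).symm.trans ((Equiv.sumCongr σ τ).trans
    ((Equiv.sumComm _ _).trans (blockEquiv ((Nat.add_comm q m).trans h))))

variable {h : m + q = n} {σ : Perm (Fin m)} {τ : Perm (Fin q)}

theorem skewSum_inl (i : Fin m) :
    skewSum h σ τ (blockEquiv h (.inl i)) =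
      blockEquiv ((Nat.add_comm q m).trans h) (.inr (σ i)) := by
  simp [skewSum]

theorem skewSum_inr (j : Fin q) :
    skewSum h σ τ (blockEquiv h (.inr j)) =
      blockEquiv ((Nat.add_comm q m).trans h) (.inl (τ j)) := by
  simp [skewSum]

theorem skewSum_inr_lt_inl (i : Fin m) (j : Fin q) :
    skewSum h σ τ (blockEquiv h (.inr j)) < skewSum h σ τ (blockEquiv h (.inl i)) := by
  rw [skewSum_inl, skewSum_inr]
  exact blockEquiv_inl_lt_inr _ _ _

theorem skewSum_inj {σ' : Perm (Fin m)} {τ' : Perm (Fin q)} :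
    skewSum h σ τ = skewSum h σ' τ' ↔ σ = σ' ∧ τ = τ' := by
  refine ⟨fun heq => ?_, fun ⟨hσ, hτ⟩ => by rw [hσ, hτ]⟩
  constructor <;> ext i
  · have hi := congrArg (· (blockEquiv h (.inl i))) heq
    simpa [skewSum_inl, Fin.ext_iff] using hi
  · have hi := congrArg (· (blockEquiv h (.inr i))) heq
    simpa [skewSum_inr, Fin.ext_iff] using hi

theorem le_val_of_injective_of_forall_lt {f : Fin q → Fin n} (hf : Function.Injective f)
    {x : Fin n} (hx : ∀ j, f j < x) : q ≤ x := by
  have card_le : (Finset.univ : Finset (Fin q)).card ≤ (Finset.Iio x).card :=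
    Finset.card_le_card_of_injOn f (fun j _ => Finset.mem_coe.2 (Finset.mem_Iio.2 (hx j)))
      hf.injOn
  rwa [Finset.card_fin, Fin.card_Iio] at card_le

theorem exists_skewSum_eq {π : Perm (Fin n)}
    (hπ : ∀ i j, π (blockEquiv h (.inr j)) < π (blockEquiv h (.inl i))) :
    ∃ σ τ, skewSum h σ τ = π := by
  have h' : q + m = n := (Nat.add_comm q m).trans h
  let values : Fin m ⊕ Fin q ≃ Fin n := (Equiv.sumComm _ _).trans (blockEquiv h')
  let e : Perm (Fin m ⊕ Fin q) := (blockEquiv h).trans (π.trans values.symm)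
  have inr_injective : Function.Injective fun j => π (blockEquiv h (.inr j)) :=
    π.injective.comp ((blockEquiv h).injective.comp Sum.inr_injective)
  have mapsTo_inl : Set.MapsTo e (Set.range Sum.inl) (Set.range Sum.inl) := by
    rintro _ ⟨i, rfl⟩
    obtain ⟨v | w, hv⟩ := values.surjective (π (blockEquiv h (.inl i)))
    · exact ⟨v, by simp [e, ← hv]⟩
    · have hlt : (π (blockEquiv h (.inl i)) : ℕ) < q := by
        simp [← hv, values, val_blockEquiv_inl]
      exact absurd (le_val_of_injective_of_forall_lt inr_injective (hπ i)) hlt.not_ge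
  obtain ⟨⟨σ, τ⟩, hστ⟩ := Perm.mem_sumCongrHom_range_of_perm_mapsTo_inl mapsTo_inl
  refine ⟨σ, τ, ?_⟩
  calc
    skewSum h σ τ = (blockEquiv h).symm.trans (e.trans values) := by rw [← hστ]; rfl
    _ = π := by ext x; simp [e]

theorem isOccurrence_skewSum_left : IsOccurrence σ (skewSum h σ τ) (blockEquiv h ∘ Sum.inl) :=
  ⟨fun _ _ => (blockEquiv_inl_lt_inl h).2, fun a b => by simp [skewSum_inl, blockEquiv_inr_lt_inr]⟩

theorem isOccurrence_skewSum_right : IsOccurrence τ (skewSum h σ τ) (blockEquiv h ∘ Sum.inr) :=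
  ⟨fun _ _ => (blockEquiv_inr_lt_inr h).2, fun a b => by simp [skewSum_inr, blockEquiv_inl_lt_inl]⟩

/-- A permutation is skew-indecomposable if it is not the skew sum of two nonempty permutations,
that is, no nonempty proper initial segment `s` of its positions carries only values larger than
those outside `s`. The empty permutation counts as skew-indecomposable. -/
def SkewIndecomposable (ρ : Perm (Fin k)) : Prop :=
  ∀ s : Set (Fin k), IsLowerSet s → s.Nonempty → sᶜ.Nonempty → ∃ a ∈ s, ∃ b ∉ s, ρ a < ρ b

theorem skewIndecomposable_appendMax (ρ : Perm (Fin k)) : SkewIndecomposable (appendMax ρ) := by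
  rintro s hs ⟨a, ha⟩ ⟨b, hb⟩
  have last_notMem : Fin.last k ∉ s := fun hlast => hb (hs (Fin.le_last b) hlast)
  refine ⟨a, ha, _, last_notMem, ?_⟩
  rw [appendMax_last, Fin.lt_last_iff_ne_last]
  exact fun heq => last_notMem ((appendMax ρ).injective (heq.trans (appendMax_last ρ).symm) ▸ ha)

theorem skewIndecomposable_p132 : SkewIndecomposable p132 := by
  rintro s hs ⟨a, ha⟩ ⟨b, hb⟩
  have zero_mem : 0 ∈ s := hs (Fin.zero_le a) ha
  refine ⟨0, zero_mem, b, hb, Fin.pos_iff_ne_zero.2 fun hb0 => hb ?_⟩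
  rwa [p132.injective (hb0.trans (show (0 : Fin 3) = p132 0 from rfl))]

theorem SkewIndecomposable.contains_skewSum {ρ : Perm (Fin k)} (hρ : SkewIndecomposable ρ) :
    Contains ρ (skewSum h σ τ) ↔ Contains ρ σ ∨ Contains ρ τ := by
  constructor
  swap
  · rintro (hσ | hτ)
    exacts [hσ.trans ⟨_, isOccurrence_skewSum_left⟩, hτ.trans ⟨_, isOccurrence_skewSum_right⟩]
  rintro ⟨f, hf⟩
  let s : Set (Fin k) := {i | f i ∈ Set.range (blockEquiv h ∘ Sum.inl)}
  have mem_range_inr (i : Fin k) (hi : i ∉ s) : f i ∈ Set.range (blockEquiv h ∘ Sum.inr) := by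
    obtain ⟨x | y, hx⟩ := (blockEquiv h).surjective (f i)
    exacts [absurd ⟨x, hx⟩ hi, ⟨y, hx⟩]
  have hs : IsLowerSet s := by
    rintro b a hab ⟨x, hx⟩
    by_contra ha
    obtain ⟨y, hy⟩ := mem_range_inr a ha
    have hle : f a ≤ f b := hf.1.monotone hab
    rw [← hx, ← hy] at hle
    exact hle.not_gt (blockEquiv_inl_lt_inr h x y)
  by_cases all_left : ∀ i, i ∈ s
  · exact .inl (hf.contains_of_forall_mem_range isOccurrence_skewSum_left all_left)
  by_cases all_right : ∀ i, i ∉ s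
  · exact .inr (hf.contains_of_forall_mem_range isOccurrence_skewSum_right
      fun i => mem_range_inr i (all_right i))
  push Not at all_left all_right
  obtain ⟨a, ⟨x, hx⟩, b, hb, hab⟩ := hρ s hs all_right all_left
  obtain ⟨y, hy⟩ := mem_range_inr b hb
  rw [hf.2, ← hx, ← hy] at hab
  exact absurd hab (skewSum_inr_lt_inl x y).not_gt

end SkewSum

section MaxSum

variable {k p q n : ℕ}

/-- The permutation `(σ ⊕ 1) ⊖ τ`, with one-line notation `σ`, maximum, `τ`, where all values of
`σ` exceed those of `τ`. -/
def maxSum (h : p + q = n) (σ : Perm (Fin p)) (τ : Perm (Fin q)) : Perm (Fin (n + 1)) :=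
  skewSum (by omega : p + 1 + q = n + 1) (appendMax σ) τ

variable {h : p + q = n} {σ : Perm (Fin p)} {τ : Perm (Fin q)}

theorem val_maxSum_symm_last : ((maxSum h σ τ).symm (Fin.last n) : ℕ) = p := by
  have h' : p + 1 + q = n + 1 := by omega
  have hmax : maxSum h σ τ (blockEquiv h' (.inl (Fin.last p))) = Fin.last n := by
    rw [maxSum, skewSum_inl, appendMax_last, Fin.ext_iff, val_blockEquiv_inr, Fin.val_last,
      Fin.val_last, Nat.add_comm, h]
  rw [← hmax, Equiv.symm_apply_apply, val_blockEquiv_inl, Fin.val_last]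

theorem maxSum_inj {σ' : Perm (Fin p)} {τ' : Perm (Fin q)} :
    maxSum h σ τ = maxSum h σ' τ' ↔ σ = σ' ∧ τ = τ' := by
  rw [maxSum, maxSum, skewSum_inj, appendMax_injective.eq_iff]

theorem eq_of_maxSum_eq_maxSum {p' q' : ℕ} {h' : p' + q' = n} {σ' : Perm (Fin p')}
    {τ' : Perm (Fin q')} (heq : maxSum h σ τ = maxSum h' σ' τ') : p = p' := by
  rw [← val_maxSum_symm_last (h := h) (σ := σ) (τ := τ), heq, val_maxSum_symm_last]

theorem apply_lt_apply_of_not_contains_p132 {π : Perm (Fin (n + 1))} (hπ : ¬ Contains p132 π)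
    {i j : Fin (n + 1)} (hi : i ≤ π.symm (Fin.last n)) (hj : π.symm (Fin.last n) < j) :
    π j < π i := by
  have hj_max : π j < Fin.last n := by
    rw [Fin.lt_last_iff_ne_last, ne_eq, ← Equiv.eq_symm_apply]
    exact hj.ne'
  rcases hi.eq_or_lt with rfl | hi
  · rwa [Equiv.apply_symm_apply]
  · by_contra! hle
    have hij : π i < π j := hle.lt_of_ne (π.injective.ne (hi.trans hj).ne)
    exact hπ (contains_p132_of_lt hi hj hij (by rwa [Equiv.apply_symm_apply]))

theorem exists_maxSum_eq {π : Perm (Fin (n + 1))} (hπ : ¬ Contains p132 π) :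
    ∃ (p q : ℕ) (h : p + q = n) (σ : Perm (Fin p)) (τ : Perm (Fin q)), maxSum h σ τ = π := by
  obtain ⟨p, hp⟩ : ∃ p, p = (π.symm (Fin.last n) : ℕ) := ⟨_, rfl⟩
  obtain ⟨q, h⟩ : ∃ q, p + q = n := ⟨n - p, by omega⟩
  have h' : p + 1 + q = n + 1 := by omega
  obtain ⟨σ', τ, hπ'⟩ : ∃ σ' τ, skewSum h' σ' τ = π := by
    refine exists_skewSum_eq fun i j => apply_lt_apply_of_not_contains_p132 hπ ?_ ?_
    · rw [Fin.le_def, val_blockEquiv_inl]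
      omega
    · rw [Fin.lt_def, val_blockEquiv_inr]
      omega
  have last_eq : π.symm (Fin.last n) = blockEquiv h' (.inl (Fin.last p)) := by
    rw [Fin.ext_iff, val_blockEquiv_inl, ← hp, Fin.val_last]
  obtain ⟨σ, rfl⟩ : ∃ σ, appendMax σ = σ' := by
    refine exists_appendMax_eq ?_
    have hlast := congrArg Fin.val (π.symm_apply_eq.1 last_eq)
    rw [← hπ', skewSum_inl, val_blockEquiv_inr, Fin.val_last] at hlast
    rw [Fin.ext_iff, Fin.val_last]
    omega
  exact ⟨p, q, h, σ, τ, hπ'⟩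

theorem contains_p132_maxSum :
    Contains p132 (maxSum h σ τ) ↔ Contains p132 σ ∨ Contains p132 τ := by
  have last_ne : p132 (Fin.last 2) ≠ Fin.last 2 := show (1 : Fin 3) ≠ 2 by decide
  rw [maxSum, skewIndecomposable_p132.contains_skewSum, contains_appendMax_iff_of_last_ne last_ne]

theorem contains_appendMax_maxSum {ρ : Perm (Fin k)} :
    Contains (appendMax ρ) (maxSum h σ τ) ↔ Contains ρ σ ∨ Contains (appendMax ρ) τ := by
  rw [maxSum, (skewIndecomposable_appendMax ρ).contains_skewSum, contains_appendMax_appendMax]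

end MaxSum

section Counting

open Finset.HasAntidiagonal (antidiagonal mem_antidiagonal)

variable {k : ℕ}

/-- The permutations of `Fin n` avoiding both `132` and `ρ`. -/
def avoiders (ρ : Perm (Fin k)) (n : ℕ) : Set (Perm (Fin n)) :=
  {π | ¬ Contains p132 π ∧ ¬ Contains ρ π}

theorem maxSum_mem_avoiders {p q n : ℕ} {h : p + q = n} {ρ : Perm (Fin k)} {σ : Perm (Fin p)}
    {τ : Perm (Fin q)} :
    maxSum h σ τ ∈ avoiders (appendMax ρ) (n + 1) ↔
      σ ∈ avoiders ρ p ∧ τ ∈ avoiders (appendMax ρ) q := by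
  simp only [avoiders, Set.mem_ofPred_eq, contains_p132_maxSum, contains_appendMax_maxSum]
  tauto

theorem card_avoiders_of_length_zero (ρ : Perm (Fin 0)) (n : ℕ) : Nat.card (avoiders ρ n) = 0 := by
  have : IsEmpty (avoiders ρ n) := ⟨fun π => π.2.2 (contains_of_length_zero ρ π.1)⟩
  exact Nat.card_of_isEmpty

theorem card_avoiders_zero (ρ : Perm (Fin (k + 1))) : Nat.card (avoiders ρ 0) = 1 := by
  have : Nonempty (avoiders ρ 0) := ⟨1, fun ⟨f, _⟩ => (f 0).elim0, fun ⟨f, _⟩ => (f 0).elim0⟩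
  exact Nat.card_unique

theorem card_avoiders_appendMax_succ (ρ : Perm (Fin k)) (n : ℕ) :
    Nat.card (avoiders (appendMax ρ) (n + 1)) =
      ∑ x ∈ antidiagonal n,
        Nat.card (avoiders ρ x.1) * Nat.card (avoiders (appendMax ρ) x.2) := by
  let glue (x : Σ x : antidiagonal n, avoiders ρ x.1.1 × avoiders (appendMax ρ) x.1.2) :
      avoiders (appendMax ρ) (n + 1) :=
    ⟨maxSum (mem_antidiagonal.1 x.1.2) x.2.1 x.2.2,
      maxSum_mem_avoiders.2 ⟨x.2.1.2, x.2.2.2⟩⟩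
  have glue_injective : Function.Injective glue := by
    rintro ⟨⟨⟨p, q⟩, h⟩, σ, τ⟩ ⟨⟨⟨p', q'⟩, h'⟩, σ', τ'⟩ heq
    have hpq : p + q = n := mem_antidiagonal.1 h
    have hpq' : p' + q' = n := mem_antidiagonal.1 h'
    replace heq : maxSum hpq σ.1 τ.1 = maxSum hpq' σ'.1 τ'.1 := congrArg Subtype.val heq
    obtain rfl : p = p' := eq_of_maxSum_eq_maxSum heq
    obtain rfl : q = q' := by omega
    obtain ⟨hσ, hτ⟩ := maxSum_inj.1 heq
    rw [Subtype.ext hσ, Subtype.ext hτ]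
  have glue_surjective : Function.Surjective glue := by
    rintro ⟨π, hπ⟩
    obtain ⟨p, q, h, σ, τ, rfl⟩ := exists_maxSum_eq hπ.1
    obtain ⟨hσ, hτ⟩ := maxSum_mem_avoiders.1 hπ
    exact ⟨⟨⟨(p, q), mem_antidiagonal.2 h⟩, ⟨σ, hσ⟩, ⟨τ, hτ⟩⟩, rfl⟩
  rw [← Nat.card_eq_of_bijective glue ⟨glue_injective, glue_surjective⟩, Nat.card_sigma,
    ← Finset.sum_coe_sort (antidiagonal n)]
  simp only [Nat.card_prod]

end Counting

section GeneratingFunction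

open PowerSeries

variable {k : ℕ}

/-- The generating function `F_ρ` of the permutations avoiding both `132` and `ρ`. -/
noncomputable def avoiderSeries (ρ : Perm (Fin k)) : PowerSeries ℚ :=
  PowerSeries.mk fun n => (Nat.card (avoiders ρ n) : ℚ)

theorem coeff_avoiderSeries (ρ : Perm (Fin k)) (n : ℕ) :
    coeff n (avoiderSeries ρ) = Nat.card (avoiders ρ n) :=
  coeff_mk _ _

theorem avoiderSeries_of_length_zero (ρ : Perm (Fin 0)) : avoiderSeries ρ = 0 := by
  ext n
  rw [coeff_avoiderSeries, card_avoiders_of_length_zero, Nat.cast_zero, map_zero]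

theorem avoiderSeries_appendMax (ρ : Perm (Fin k)) :
    avoiderSeries (appendMax ρ) = 1 + X * (avoiderSeries ρ * avoiderSeries (appendMax ρ)) := by
  ext n
  cases n with
  | zero =>
    rw [coeff_avoiderSeries, card_avoiders_zero, map_add, coeff_zero_X_mul, coeff_zero_one,
      add_zero, Nat.cast_one]
  | succ n =>
    rw [map_add, coeff_succ_X_mul, coeff_mul, coeff_one, if_neg n.succ_ne_zero,
      zero_add]
    simp only [coeff_avoiderSeries, card_avoiders_appendMax_succ, Nat.cast_sum, Nat.cast_mul]

theorem coe_pU_add_two (m : ℕ) :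
    (pU (m + 2) : PowerSeries ℚ) = (pU (m + 1) : PowerSeries ℚ) - X * (pU m : PowerSeries ℚ) := by
  simp [pU]

end GeneratingFunction

/-- For `k ≥ 1`, the generating function `F` for `132`-avoiding
permutations also avoiding the increasing pattern `12⋯k` (the identity of `S_k`)
satisfies `F·p_k = p_{k−1}` (here `pU (m+1) = p_m`). -/
theorem stmt14 (k : ℕ) (hk : 1 ≤ k) :
    (PowerSeries.mk fun n => ((Nat.card {π : Equiv.Perm (Fin n) //
        ¬ Contains p132 π ∧ ¬ Contains (1 : Equiv.Perm (Fin k)) π} : ℕ) : ℚ))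
      * (pU (k + 1) : PowerSeries ℚ) = (pU k : PowerSeries ℚ) := by
  change avoiderSeries (1 : Perm (Fin k)) * _ = _
  clear hk
  induction k with
  | zero => simp [avoiderSeries_of_length_zero, pU]
  | succ k ih =>
    have hrec := avoiderSeries_appendMax (1 : Perm (Fin k))
    rw [appendMax_one] at hrec
    rw [coe_pU_add_two]
    linear_combination (pU (k + 1) : PowerSeries ℚ) * hrec +
      PowerSeries.X * avoiderSeries (1 : Perm (Fin (k + 1))) * ih
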